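/- Let K : ℝ³ ∖ {0} → ℝ be smooth, homogeneous of degree −3, and with mean value zero on the unit sphere, so that the convolution Tf(x) = p.v. ∫_{ℝ³} K(x − y) f(y) dy defines a Calderón–Zygmund singular integral operator. Let 0 < a < 2, b > 0, and let f be a smooth axially symmetric function on ℝ³ satisfying |f(x)| + |∇f(x)| ≤ ln^b(e + |x'|) / (1 + |x'|)^a for all x = (x', z) ∈ ℝ² × ℝ. Then there exists a constant c₀ such that |Tf(x)| ≤ c₀ ln^{b+1}(e + |x'|) / (1 + |x'|)^a for all x ∈ ℝ³. -/

import Mathlib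

/-!
Write `w(r) = ln^b(e + r) / (1 + r)^a`. After the substitution `v = x - y` the truncated integral
is `∫_{δ < ‖v‖} K(v) f(x - v) dv`, which is split at `‖v‖ = 1`; it suffices to bound it uniformly
in `0 < δ < 1`.

*Near part* (`near_le`). Since `K` has mean zero on `δ < ‖v‖ < 1`, one may replace `f(x - v)` by
`f(x - v) - f(x)`, which is at most `C w(|x'|) ‖v‖` by the gradient bound, because `w` varies by at
most a constant factor over distance `1`. As `|K(v)| ≤ C ‖v‖⁻³` (`kernel_le`), what remains is
`∫_{‖v‖ < 1} ‖v‖⁻² dv < ∞`. This part contributes `O(w(|x'|))`.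

*Far part* (`far_le`). Here only sizes matter. The comparison `weight_le`,
`w(s) ≤ C w(r) (τ^a + τ^(a/2))` with `τ = (1 + r) / (1 + s)`, removes the logarithm from the
integrand: it suffices to show, for `0 < α < 2`,
`∫_{‖v‖ ≥ 1} ‖v‖⁻³ (1 + |x' - v'|)^(-α) dv ≤ C (1 + |x'|)^(-α) ln(e + |x'|)` (`lintegral_far_le`).
Cut into dyadic shells `‖v‖ ~ 2^k`. The shell contributes at most `C (2^k)^(-α)`, because
`(1 + |y'|)^(-α) ≤ (1 + |y₁|)^(-α/2) (1 + |y₂|)^(-α/2)` reduces the integral over a cube to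
one-dimensional integrals, convergent at the right rate as `α / 2 < 1`. It also contributes at most
`C (1 + |x'|)^(-α)`, trivially so when `2^k` is small compared with `1 + |x'|`. The `O(ln(e + |x'|))`
shells with `2^k ≤ 1 + |x'|` produce the logarithm and the others form a geometric series.
-/

open MeasureTheory Real Filter Set

noncomputable section

abbrev E3 := EuclideanSpace ℝ (Fin 3)

/-- The cylindrical radius `|x'| = √(x₁² + x₂²)` of a point of `ℝ³`. -/
def rad (x : E3) : ℝ := Real.sqrt ((x 0) ^ 2 + (x 1) ^ 2)

/-! ### The cylindrical radius and the weight -/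

lemma rad_nonneg (x : E3) : 0 ≤ rad x := Real.sqrt_nonneg _

lemma continuous_rad : Continuous rad := by unfold rad; fun_prop

lemma abs_zero_le_rad (x : E3) : |x 0| ≤ rad x :=
  Real.abs_le_sqrt (by nlinarith [sq_nonneg (x 1)])

lemma abs_one_le_rad (x : E3) : |x 1| ≤ rad x :=
  Real.abs_le_sqrt (by nlinarith [sq_nonneg (x 0)])

lemma abs_apply_le_norm (x : E3) (i : Fin 3) : |x i| ≤ ‖x‖ := by
  simpa using PiLp.norm_apply_le x i

lemma rad_le_norm (x : E3) : rad x ≤ ‖x‖ := by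
  rw [EuclideanSpace.norm_eq, rad]
  apply Real.sqrt_le_sqrt
  simp only [Fin.sum_univ_three, Real.norm_eq_abs, sq_abs]
  nlinarith [sq_nonneg (x 2)]

lemma rad_add_le (x y : E3) : rad (x + y) ≤ rad x + rad y := by
  have hx := Real.sq_sqrt (show 0 ≤ x 0 ^ 2 + x 1 ^ 2 by positivity)
  have hy := Real.sq_sqrt (show 0 ≤ y 0 ^ 2 + y 1 ^ 2 by positivity)
  have h := Real.sqrt_mul_self (show 0 ≤ rad x * rad y from
    mul_nonneg (rad_nonneg x) (rad_nonneg y))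
  have hcs : x 0 * y 0 + x 1 * y 1 ≤ rad x * rad y := by
    apply le_of_sq_le_sq _ (mul_nonneg (rad_nonneg x) (rad_nonneg y))
    rw [mul_pow, rad, rad, hx, hy]
    nlinarith [sq_nonneg (x 0 * y 1 - x 1 * y 0)]
  rw [show rad (x + y) = √((x 0 + y 0) ^ 2 + (x 1 + y 1) ^ 2) from rfl]
  apply Real.sqrt_le_iff.2 ⟨add_nonneg (rad_nonneg x) (rad_nonneg y), ?_⟩
  have hx' : rad x ^ 2 = x 0 ^ 2 + x 1 ^ 2 := hx
  have hy' : rad y ^ 2 = y 0 ^ 2 + y 1 ^ 2 := hy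
  nlinarith

lemma rad_le_rad_sub_add (x v : E3) : rad x ≤ rad (x - v) + ‖v‖ := by
  have := rad_add_le (x - v) v
  rw [sub_add_cancel] at this
  linarith [rad_le_norm v]

/-- Comparison of the weight at two radii. The factor `τ ^ a`, `τ = (1 + r) / (1 + s)`, is what is
needed for `s ≤ r`; for `s ≥ r` half of the decay is given up to absorb the growth of the
logarithm. -/
lemma weight_le {a b : ℝ} (ha : 0 < a) (hb : 0 < b) : ∃ C : ℝ, 0 < C ∧ ∀ r s : ℝ, 0 ≤ r → 0 ≤ s →
    log (exp 1 + s) ^ b / (1 + s) ^ a ≤ C * (log (exp 1 + r) ^ b / (1 + r) ^ a) *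
      (((1 + r) / (1 + s)) ^ a + ((1 + r) / (1 + s)) ^ (a / 2)) := by
  -- the exponent for which `((1 + s) / (1 + r)) ^ η` raised to the power `b` costs exactly `a / 2`
  set η := a / (2 * b) with hη
  have hη0 : 0 < η := by positivity
  refine ⟨(1 + 1 / η) ^ b, by positivity, fun r s hr hs => ?_⟩
  have he : 1 ≤ exp 1 := Real.one_le_exp (by norm_num)
  have hLr : 1 ≤ log (exp 1 + r) := by
    rw [Real.le_log_iff_exp_le (by positivity)]; linarith
  have hLs : 1 ≤ log (exp 1 + s) := by
    rw [Real.le_log_iff_exp_le (by positivity)]; linarith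
  have hC1 : 1 ≤ (1 + 1 / η) ^ b := Real.one_le_rpow (by
    have : 0 < 1 / η := by positivity
    linarith) hb.le
  have hτ : ∀ c : ℝ, ((1 + r) / (1 + s)) ^ c = (1 + r) ^ c / (1 + s) ^ c := fun c =>
    Real.div_rpow (by positivity) (by positivity) c
  have hr1 : 0 < 1 + r := by positivity
  have hs1 : 0 < 1 + s := by positivity
  have hra : 0 < (1 + r) ^ a := by positivity
  rcases le_total s r with h | h
  · calc log (exp 1 + s) ^ b / (1 + s) ^ a ≤ log (exp 1 + r) ^ b / (1 + s) ^ a := by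
          gcongr
      _ = 1 * (log (exp 1 + r) ^ b / (1 + r) ^ a) * (((1 + r) / (1 + s)) ^ a + 0) := by
          rw [hτ]; field_simp; ring
      _ ≤ _ := by
          gcongr
          positivity
  · have ht : 1 ≤ (1 + s) / (1 + r) := by rw [le_div_iff₀ hr1]; linarith
    have hlog : log (exp 1 + s) ≤ log (exp 1 + r) * ((1 + 1 / η) * ((1 + s) / (1 + r)) ^ η) := by
      have h1 : exp 1 + s ≤ (exp 1 + r) * ((1 + s) / (1 + r)) := by
        rw [mul_div_assoc', le_div_iff₀ hr1]
        nlinarith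
      have h2 : log (exp 1 + s) ≤ log (exp 1 + r) + log ((1 + s) / (1 + r)) := by
        rw [← Real.log_mul (by positivity) (by positivity)]
        exact Real.log_le_log (by positivity) h1
      have h3 := Real.log_le_rpow_div (show 0 ≤ (1 + s) / (1 + r) by positivity) hη0
      have h4 : 1 ≤ ((1 + s) / (1 + r)) ^ η := Real.one_le_rpow ht hη0.le
      have h5 : log ((1 + s) / (1 + r)) ≤ log (exp 1 + r) * (((1 + s) / (1 + r)) ^ η / η) :=
        h3.trans (le_mul_of_one_le_left (by positivity) hLr)
      calc _ ≤ log (exp 1 + r) * 1 + log (exp 1 + r) * (((1 + s) / (1 + r)) ^ η / η) := by linarith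
        _ ≤ log (exp 1 + r) * ((1 + s) / (1 + r)) ^ η +
            log (exp 1 + r) * (((1 + s) / (1 + r)) ^ η / η) := by gcongr
        _ = _ := by ring
    have hpow : (((1 + s) / (1 + r)) ^ η) ^ b = (1 + s) ^ (a / 2) / (1 + r) ^ (a / 2) := by
      rw [← Real.rpow_mul (by positivity), ← Real.div_rpow (by positivity) (by positivity)]
      congr 1
      rw [hη]; field_simp
    have hsa : (1 + s) ^ a = (1 + s) ^ (a / 2) * (1 + s) ^ (a / 2) := by
      rw [← Real.rpow_add hs1]; congr 1; ring
    have hra' : (1 + r) ^ a = (1 + r) ^ (a / 2) * (1 + r) ^ (a / 2) := by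
      rw [← Real.rpow_add hr1]; congr 1; ring
    calc log (exp 1 + s) ^ b / (1 + s) ^ a
        ≤ (log (exp 1 + r) * ((1 + 1 / η) * ((1 + s) / (1 + r)) ^ η)) ^ b / (1 + s) ^ a := by
          gcongr
      _ = (1 + 1 / η) ^ b * (log (exp 1 + r) ^ b / (1 + r) ^ a) *
            (0 + ((1 + r) / (1 + s)) ^ (a / 2)) := by
          rw [Real.mul_rpow (by positivity) (by positivity),
            Real.mul_rpow (by positivity) (by positivity), hpow, hτ, hsa, hra']
          have : 0 < (1 + r) ^ (a / 2) := by positivity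
          have : 0 < (1 + s) ^ (a / 2) := by positivity
          field_simp
          ring
      _ ≤ _ := by
          gcongr
          positivity

/-! ### Dyadic estimate of the far field -/

/-- One-dimensional estimate, uniform in the position `t` of the singularity: away from
`|t - s| ≤ ρ` the integrand is at most `ρ ^ (-γ)`. -/
lemma integral_one_add_abs_rpow_le {γ : ℝ} (hγ0 : 0 < γ) (hγ : γ < 1) : ∃ C : ℝ, 0 < C ∧
    ∀ ρ t : ℝ, 1 ≤ ρ →
      ∫ s in Ioo (-(2 * ρ)) (2 * ρ), (1 + |t - s|) ^ (-γ) ≤ C * ρ ^ (1 - γ) := by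
  refine ⟨4 + 4 / (1 - γ), by have : 0 < 1 - γ := by linarith
                              positivity, fun ρ t hρ => ?_⟩
  have hγ' : 0 < 1 - γ := by linarith
  have hcont : Continuous fun u : ℝ => (1 + |u|) ^ (-γ) :=
    (by fun_prop : Continuous fun u : ℝ => 1 + |u|).rpow_const fun u => Or.inl (by positivity)
  have hhalf : ∫ u in (0 : ℝ)..ρ, (1 + |u|) ^ (-γ) ≤ 2 / (1 - γ) * ρ ^ (1 - γ) := by
    have h1 : ∫ u in (0 : ℝ)..ρ, (1 + |u|) ^ (-γ) = ∫ u in (0 : ℝ)..ρ, (1 + u) ^ (-γ) := by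
      apply intervalIntegral.integral_congr
      intro u hu
      rw [uIcc_of_le (by linarith)] at hu
      simp only [abs_of_nonneg hu.1]
    rw [h1, intervalIntegral.integral_comp_add_left (fun u => u ^ (-γ)) 1,
      integral_rpow (Or.inl (by linarith))]
    have h2 : (1 + ρ) ^ (-γ + 1) ≤ 2 * ρ ^ (1 - γ) := by
      rw [show -γ + 1 = 1 - γ by ring]
      calc (1 + ρ) ^ (1 - γ) ≤ (2 * ρ) ^ (1 - γ) := by gcongr; linarith
        _ = 2 ^ (1 - γ) * ρ ^ (1 - γ) := Real.mul_rpow (by norm_num) (by linarith)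
        _ ≤ 2 ^ (1 : ℝ) * ρ ^ (1 - γ) := by gcongr <;> linarith
        _ = _ := by rw [Real.rpow_one]
    have h3 : 0 ≤ (1 + (0 : ℝ)) ^ (-γ + 1) := by positivity
    rw [show -γ + 1 = 1 - γ by ring] at *
    rw [div_mul_eq_mul_div]
    gcongr
    linarith
  have hsym : ∫ u in (-ρ)..ρ, (1 + |u|) ^ (-γ) = 2 * ∫ u in (0 : ℝ)..ρ, (1 + |u|) ^ (-γ) := by
    rw [← intervalIntegral.integral_add_adjacent_intervals (b := 0)
      (hcont.intervalIntegrable _ _) (hcont.intervalIntegrable _ _)]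
    have := intervalIntegral.integral_comp_neg (a := 0) (b := ρ) fun u : ℝ => (1 + |u|) ^ (-γ)
    simp only [abs_neg, neg_zero] at this
    rw [← this]; ring
  have hpt : ∀ u : ℝ, (1 + |u|) ^ (-γ) ≤
      ρ ^ (-γ) + (Ioc (-ρ) ρ).indicator (fun u => (1 + |u|) ^ (-γ)) u := by
    intro u
    by_cases hu : u ∈ Ioc (-ρ) ρ
    · rw [indicator_of_mem hu]
      have : 0 < ρ ^ (-γ) := by positivity
      linarith
    · rw [indicator_of_notMem hu, add_zero]
      have : ρ ≤ |u| := by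
        by_contra hlt
        push Not at hlt
        exact hu ⟨(abs_lt.1 hlt).1, (abs_lt.1 hlt).2.le⟩
      exact Real.rpow_le_rpow_of_nonpos (by linarith) (by linarith) (by linarith)
  have hind : Integrable ((Ioc (-ρ) ρ).indicator fun u : ℝ => (1 + |u|) ^ (-γ)) := by
    rw [integrable_indicator_iff measurableSet_Ioc]
    exact (hcont.integrableOn_Icc).mono_set Ioc_subset_Icc_self
  have hindt := hind.comp_sub_left t
  have hpos : ∀ u : ℝ, 0 ≤ (Ioc (-ρ) ρ).indicator (fun u => (1 + |u|) ^ (-γ)) u :=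
    fun u => indicator_nonneg (fun u _ => by positivity) u
  calc ∫ s in Ioo (-(2 * ρ)) (2 * ρ), (1 + |t - s|) ^ (-γ)
      ≤ ∫ s in Ioo (-(2 * ρ)) (2 * ρ), (ρ ^ (-γ) +
          (Ioc (-ρ) ρ).indicator (fun u => (1 + |u|) ^ (-γ)) (t - s)) := by
        apply setIntegral_mono
        · exact ((hcont.comp (continuous_const.sub continuous_id)).integrableOn_Icc).mono_set
            Ioo_subset_Icc_self
        · exact (integrable_const _).add hindt.integrableOn
        · exact fun s => hpt (t - s)
    _ = (4 * ρ) * ρ ^ (-γ) + ∫ s in Ioo (-(2 * ρ)) (2 * ρ),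
          (Ioc (-ρ) ρ).indicator (fun u => (1 + |u|) ^ (-γ)) (t - s) := by
        rw [integral_add (integrable_const _) hindt.integrableOn]
        congr 1
        rw [setIntegral_const, Measure.real, Real.volume_Ioo, ENNReal.toReal_ofReal (by linarith),
          smul_eq_mul]
        ring
    _ ≤ (4 * ρ) * ρ ^ (-γ) + ∫ s,
          (Ioc (-ρ) ρ).indicator (fun u => (1 + |u|) ^ (-γ)) (t - s) := by
        exact add_le_add le_rfl
          (setIntegral_le_integral hindt (Eventually.of_forall fun s => hpos (t - s)))
    _ = (4 * ρ) * ρ ^ (-γ) + 2 * ∫ u in (0 : ℝ)..ρ, (1 + |u|) ^ (-γ) := by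
        rw [integral_sub_left_eq_self, integral_indicator measurableSet_Ioc,
          ← intervalIntegral.integral_of_le (by linarith), hsym]
    _ ≤ (4 * ρ) * ρ ^ (-γ) + 2 * (2 / (1 - γ) * ρ ^ (1 - γ)) := by gcongr
    _ = (4 + 4 / (1 - γ)) * ρ ^ (1 - γ) := by
        rw [show 1 - γ = 1 + -γ by ring, Real.rpow_add (by linarith), Real.rpow_one]
        ring

/-- The ball of radius `2 ρ` lies in a cube, on which `(1 + |y'|) ^ (-α)` is dominated by a product of
functions of one variable. -/
lemma lintegral_ball_le {α : ℝ} (hα0 : 0 < α) (hα : α < 2) : ∃ C : ℝ, 0 < C ∧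
    ∀ (ρ : ℝ) (x : E3), 1 ≤ ρ →
      ∫⁻ v in Metric.ball (0 : E3) (2 * ρ), ENNReal.ofReal ((1 + rad (x - v)) ^ (-α)) ≤
        ENNReal.ofReal (C * ρ ^ (3 - α)) := by
  obtain ⟨C, hC, h⟩ := integral_one_add_abs_rpow_le (γ := α / 2) (by linarith) (by linarith)
  refine ⟨4 * C ^ 2, by positivity, fun ρ x hρ => ?_⟩
  set I : Set ℝ := Ioo (-(2 * ρ)) (2 * ρ) with hI
  set g : Fin 3 → ℝ → ℝ := ![I.indicator fun s => (1 + |x 0 - s|) ^ (-(α / 2)),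
    I.indicator fun s => (1 + |x 1 - s|) ^ (-(α / 2)), I.indicator fun _ => 1] with hg
  have hcont : ∀ t : ℝ, Continuous fun s : ℝ => (1 + |t - s|) ^ (-(α / 2)) := fun t =>
    (by fun_prop : Continuous fun s : ℝ => 1 + |t - s|).rpow_const fun u => Or.inl (by positivity)
  have hgi : ∀ i, Integrable (g i) := by
    intro i
    fin_cases i
    · exact ((hcont _).integrableOn_Icc.mono_set Ioo_subset_Icc_self).integrable_indicator
        measurableSet_Ioo
    · exact ((hcont _).integrableOn_Icc.mono_set Ioo_subset_Icc_self).integrable_indicator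
        measurableSet_Ioo
    · exact (integrableOn_const (by simp [hI])).integrable_indicator measurableSet_Ioo
  have hg0 : ∀ i s, 0 ≤ g i s := by
    have hi0 : ∀ t s, 0 ≤ I.indicator (fun s : ℝ => (1 + |t - s|) ^ (-(α / 2))) s :=
      fun t s => indicator_nonneg (fun u _ => by positivity) s
    intro i s
    fin_cases i
    · exact hi0 _ s
    · exact hi0 _ s
    · exact indicator_nonneg (fun _ _ => zero_le_one) s
  have hgp : Integrable fun v : Fin 3 → ℝ => ∏ i, g i (v i) := Integrable.fintype_prod hgi
  have hρp : 0 < ρ := by linarith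
  calc ∫⁻ v in Metric.ball (0 : E3) (2 * ρ), ENNReal.ofReal ((1 + rad (x - v)) ^ (-α))
      ≤ ∫⁻ v in Metric.ball (0 : E3) (2 * ρ), ENNReal.ofReal (∏ i, g i (v i)) := by
        apply setLIntegral_mono' measurableSet_ball
        intro v hv
        rw [mem_ball_zero_iff] at hv
        have hm : ∀ i, v i ∈ I := fun i => by
          have := (abs_apply_le_norm v i).trans_lt hv
          exact abs_lt.1 this
        apply ENNReal.ofReal_le_ofReal
        simp only [hg, Fin.prod_univ_three, Matrix.cons_val_zero, Matrix.cons_val_one,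
          Matrix.cons_val, indicator_of_mem (hm _), mul_one]
        have h0 := abs_zero_le_rad (x - v)
        have h1 := abs_one_le_rad (x - v)
        have hr := rad_nonneg (x - v)
        rw [PiLp.sub_apply] at h0 h1
        rw [show -α = -(α / 2) + -(α / 2) by ring, Real.rpow_add (by positivity)]
        apply mul_le_mul _ _ (by positivity) (by positivity)
        · exact Real.rpow_le_rpow_of_nonpos (by positivity) (by linarith) (by linarith)
        · exact Real.rpow_le_rpow_of_nonpos (by positivity) (by linarith) (by linarith)
    _ ≤ ∫⁻ v : E3, ENNReal.ofReal (∏ i, g i (v i)) := setLIntegral_le_lintegral _ _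
    _ = ∫⁻ v : Fin 3 → ℝ, ENNReal.ofReal (∏ i, g i (v i)) :=
        (EuclideanSpace.volume_preserving_symm_measurableEquiv_toLp (Fin 3)).lintegral_comp_emb
          (MeasurableEquiv.measurableEmbedding _)
          (fun v : Fin 3 → ℝ => ENNReal.ofReal (∏ i, g i (v i)))
    _ = ENNReal.ofReal (∫ v : Fin 3 → ℝ, ∏ i, g i (v i)) :=
        (ofReal_integral_eq_lintegral_ofReal hgp
          (Eventually.of_forall fun v => Finset.prod_nonneg fun i _ => hg0 i _)).symm
    _ ≤ ENNReal.ofReal (4 * C ^ 2 * ρ ^ (3 - α)) := by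
        apply ENNReal.ofReal_le_ofReal
        rw [integral_fintype_prod_volume_eq_prod]
        simp only [hg, Fin.prod_univ_three, Matrix.cons_val_zero, Matrix.cons_val_one,
          Matrix.cons_val, integral_indicator (measurableSet_Ioo (a := -(2 * ρ)) (b := 2 * ρ)), hI]
        have hz : ∫ _ in Ioo (-(2 * ρ)) (2 * ρ), (1 : ℝ) = 4 * ρ := by
          rw [setIntegral_const, Measure.real, Real.volume_Ioo,
            ENNReal.toReal_ofReal (by linarith), smul_eq_mul]
          ring
        rw [hz]
        calc _ ≤ (C * ρ ^ (1 - α / 2)) * (C * ρ ^ (1 - α / 2)) * (4 * ρ) := by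
              gcongr
              · exact h ρ (x 0) hρ
              · exact h ρ (x 1) hρ
          _ = 4 * C ^ 2 * (ρ ^ (1 - α / 2) * ρ ^ (1 - α / 2) * ρ ^ (1 : ℝ)) := by
              rw [Real.rpow_one]; ring
          _ = _ := by
              rw [← Real.rpow_add hρp, ← Real.rpow_add hρp]
              congr 2; ring

/-- The dyadic shell `2 ^ k ≤ ‖v‖ < 2 ^ (k + 1)`. -/
def shell (k : ℕ) : Set E3 := {v | (2 : ℝ) ^ k ≤ ‖v‖ ∧ ‖v‖ < 2 * 2 ^ k}

lemma measurableSet_shell (k : ℕ) : MeasurableSet (shell k) :=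
  (measurableSet_le measurable_const measurable_norm).inter
    (measurableSet_lt measurable_norm measurable_const)

/-- The first bound is the relevant one for `2 ^ k ≲ 1 + |x'|`, the second for larger shells. The
first holds for every `k`: it is weaker than the second when `2 ^ k ≳ 1 + |x'|`. -/
lemma lintegral_shell_le {α : ℝ} (hα0 : 0 < α) (hα : α < 2) : ∃ C : ℝ, 0 < C ∧
    ∀ (k : ℕ) (x : E3),
      ∫⁻ v in shell k, ENNReal.ofReal ((1 + rad (x - v)) ^ (-α) / ‖v‖ ^ 3) ≤
        ENNReal.ofReal (C * (1 + rad x) ^ (-α)) ∧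
      ∫⁻ v in shell k, ENNReal.ofReal ((1 + rad (x - v)) ^ (-α) / ‖v‖ ^ 3) ≤
        ENNReal.ofReal (C * ((2 : ℝ) ^ k) ^ (-α)) := by
  obtain ⟨C, hC, h⟩ := lintegral_ball_le hα0 hα
  set V : ℝ := (volume : Measure E3).real (Metric.ball 0 1) with hV
  have hV0 : 0 ≤ V := measureReal_nonneg
  refine ⟨C * 4 ^ α + 8 * V * 2 ^ α, by positivity, fun k x => ?_⟩
  set q : ℝ := 2 ^ k with hq
  have hq1 : 1 ≤ q := one_le_pow₀ (by norm_num)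
  have hq0 : 0 < q := by linarith
  have hsub : shell k ⊆ Metric.ball 0 (2 * q) := fun v hv => mem_ball_zero_iff.2 hv.2
  have hr := rad_nonneg x
  have hC4 : C ≤ C * 4 ^ α := le_mul_of_one_le_right hC.le
    (Real.one_le_rpow (by norm_num) hα0.le)
  have hpt : ∀ v ∈ shell k, ENNReal.ofReal ((1 + rad (x - v)) ^ (-α) / ‖v‖ ^ 3) ≤
      ENNReal.ofReal (1 / q ^ 3) * ENNReal.ofReal ((1 + rad (x - v)) ^ (-α)) := by
    intro v hv
    have hrv := rad_nonneg (x - v)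
    rw [← ENNReal.ofReal_mul (by positivity)]
    apply ENNReal.ofReal_le_ofReal
    rw [div_eq_mul_one_div, mul_comm]
    have : q ≤ ‖v‖ := hv.1
    gcongr
  have hmain : ∫⁻ v in shell k, ENNReal.ofReal ((1 + rad (x - v)) ^ (-α) / ‖v‖ ^ 3) ≤
        ENNReal.ofReal (C * q ^ (-α)) := by
    calc _ ≤ ∫⁻ v in shell k, ENNReal.ofReal (1 / q ^ 3) *
              ENNReal.ofReal ((1 + rad (x - v)) ^ (-α)) :=
          setLIntegral_mono' (measurableSet_shell k) hpt
      _ = ENNReal.ofReal (1 / q ^ 3) *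
            ∫⁻ v in shell k, ENNReal.ofReal ((1 + rad (x - v)) ^ (-α)) :=
          lintegral_const_mul' _ _ ENNReal.ofReal_ne_top
      _ ≤ ENNReal.ofReal (1 / q ^ 3) * ENNReal.ofReal (C * q ^ (3 - α)) := by
          gcongr
          exact (lintegral_mono_set hsub).trans (h q x hq1)
      _ = ENNReal.ofReal (C * q ^ (-α)) := by
          rw [← ENNReal.ofReal_mul (by positivity)]
          congr 1
          rw [show (3 : ℝ) - α = 3 + -α by ring, Real.rpow_add hq0,
            show q ^ (3 : ℝ) = q ^ 3 by exact_mod_cast Real.rpow_natCast q 3]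
          field_simp
  constructor
  -- for `4 q ≤ 1 + |x'|` one has `1 + |x' - v'| ≥ (1 + |x'|) / 2` throughout the shell
  · by_cases h4 : 4 * q ≤ 1 + rad x
    · calc _ ≤ ∫⁻ v in shell k, ENNReal.ofReal (1 / q ^ 3 * (2 ^ α * (1 + rad x) ^ (-α))) := by
            apply setLIntegral_mono' (measurableSet_shell k)
            intro v hv
            have hrv := rad_nonneg (x - v)
            refine (hpt v hv).trans ?_
            rw [← ENNReal.ofReal_mul (by positivity)]
            apply ENNReal.ofReal_le_ofReal
            gcongr
            have h1 := rad_le_rad_sub_add x v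
            have h2 : ‖v‖ < 2 * q := hv.2
            calc (1 + rad (x - v)) ^ (-α) ≤ ((1 + rad x) / 2) ^ (-α) :=
                  Real.rpow_le_rpow_of_nonpos (by positivity) (by linarith) (by linarith)
              _ = _ := by
                  rw [Real.div_rpow (by positivity) (by norm_num), Real.rpow_neg (x := 2) (by norm_num)]
                  field_simp
        _ = ENNReal.ofReal (1 / q ^ 3 * (2 ^ α * (1 + rad x) ^ (-α))) * volume (shell k) :=
            setLIntegral_const _ _
        _ ≤ ENNReal.ofReal (1 / q ^ 3 * (2 ^ α * (1 + rad x) ^ (-α))) *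
              ENNReal.ofReal ((2 * q) ^ 3 * V) := by
            gcongr
            refine (measure_mono hsub).trans ?_
            rw [Measure.addHaar_ball _ _ (by positivity : 0 ≤ 2 * q),
              ENNReal.ofReal_mul (by positivity), hV, ofReal_measureReal (by
                exact measure_ball_lt_top.ne)]
            simp
        _ = ENNReal.ofReal (8 * V * 2 ^ α * (1 + rad x) ^ (-α)) := by
            rw [← ENNReal.ofReal_mul (by positivity)]
            congr 1
            field_simp
            ring
        _ ≤ _ := by
            apply ENNReal.ofReal_le_ofReal
            gcongr
            have : 0 < C * 4 ^ α := by positivity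
            linarith
    · push Not at h4
      refine hmain.trans (ENNReal.ofReal_le_ofReal ?_)
      calc C * q ^ (-α) ≤ C * ((1 + rad x) / 4) ^ (-α) := by
            refine mul_le_mul_of_nonneg_left ?_ hC.le
            exact Real.rpow_le_rpow_of_nonpos (by positivity) (by linarith) (by linarith)
        _ = C * 4 ^ α * (1 + rad x) ^ (-α) := by
            rw [Real.div_rpow (by positivity) (by norm_num), Real.rpow_neg (x := 4) (by norm_num)]
            field_simp
        _ ≤ _ := by
            gcongr
            have : 0 ≤ 8 * V * 2 ^ α := by positivity
            linarith
  · refine hmain.trans (ENNReal.ofReal_le_ofReal ?_)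
    gcongr
    have : 0 ≤ 8 * V * 2 ^ α := by positivity
    linarith

/-- Summation over shells: about `log₂ (1 + |x'|)` of them contribute `(1 + |x'|) ^ (-α)` each, and
the rest form a geometric series. -/
lemma lintegral_far_le {α : ℝ} (hα0 : 0 < α) (hα : α < 2) : ∃ C : ℝ, 0 < C ∧
    ∀ x : E3,
      ∫⁻ v in {v : E3 | 1 ≤ ‖v‖}, ENNReal.ofReal ((1 + rad (x - v)) ^ (-α) / ‖v‖ ^ 3) ≤
        ENNReal.ofReal (C * (1 + rad x) ^ (-α) * log (exp 1 + rad x)) := by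
  obtain ⟨C, hC, h⟩ := lintegral_shell_le hα0 hα
  set t : ℝ := 2 ^ (-α) with ht
  have ht0 : 0 < t := by positivity
  have ht1 : t < 1 := Real.rpow_lt_one_of_one_lt_of_neg (by norm_num) (by linarith)
  have ht1' : 0 < 1 - t := by linarith
  have hlog2 : 0 < log 2 := Real.log_pos (by norm_num)
  refine ⟨C * (1 / log 2 + 1 + 1 / (1 - t)), by positivity, fun x => ?_⟩
  have hr := rad_nonneg x
  have hL : 1 ≤ log (exp 1 + rad x) := by
    rw [Real.le_log_iff_exp_le (by positivity)]; linarith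
  have he : 1 ≤ exp 1 := Real.one_le_exp (by norm_num)
  have hlogR : 0 ≤ log (1 + rad x) := Real.log_nonneg (by linarith)
  set N := ⌈log (1 + rad x) / log 2⌉₊ with hN
  have hNle : (N : ℝ) ≤ (1 / log 2 + 1) * log (exp 1 + rad x) := by
    have h1 : (N : ℝ) < log (1 + rad x) / log 2 + 1 := Nat.ceil_lt_add_one (by positivity)
    have h2 : log (1 + rad x) / log 2 ≤ log (exp 1 + rad x) / log 2 := by
      gcongr
    calc (N : ℝ) ≤ log (exp 1 + rad x) / log 2 + log (exp 1 + rad x) := by linarith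
      _ = _ := by ring
  have hNR : 1 + rad x ≤ 2 ^ N := by
    have h1 : log (1 + rad x) / log 2 ≤ N := Nat.le_ceil _
    rw [div_le_iff₀ hlog2, ← Real.log_pow] at h1
    exact (Real.log_le_log_iff (by positivity) (by positivity)).1 h1
  set F : ℕ → ENNReal := fun k =>
    ∫⁻ v in shell k, ENNReal.ofReal ((1 + rad (x - v)) ^ (-α) / ‖v‖ ^ 3) with hF
  have hcover : {v : E3 | 1 ≤ ‖v‖} ⊆ ⋃ k, shell k := by
    intro v hv
    obtain ⟨k, hk1, hk2⟩ := exists_nat_pow_near (x := ‖v‖) (y := (2 : ℝ)) hv (by norm_num)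
    exact mem_iUnion.2 ⟨k, hk1, by rw [pow_succ] at hk2; linarith⟩
  have htail : ∀ j, F (j + N) ≤ ENNReal.ofReal (C * (1 + rad x) ^ (-α) * t ^ j) := by
    intro j
    refine ((h (j + N) x).2).trans (ENNReal.ofReal_le_ofReal ?_)
    rw [pow_add, Real.mul_rpow (by positivity) (by positivity)]
    have h1 : ((2 : ℝ) ^ j) ^ (-α) = t ^ j := by
      rw [ht, ← Real.rpow_natCast, ← Real.rpow_natCast, ← Real.rpow_mul (by norm_num),
        ← Real.rpow_mul (by norm_num), mul_comm]
    have h2 : ((2 : ℝ) ^ N) ^ (-α) ≤ (1 + rad x) ^ (-α) :=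
      Real.rpow_le_rpow_of_nonpos (by positivity) hNR (by linarith)
    rw [h1]
    calc C * (t ^ j * (2 ^ N) ^ (-α)) ≤ C * (t ^ j * (1 + rad x) ^ (-α)) := by gcongr
      _ = _ := by ring
  calc _ ≤ ∫⁻ v in ⋃ k, shell k, ENNReal.ofReal ((1 + rad (x - v)) ^ (-α) / ‖v‖ ^ 3) :=
        lintegral_mono_set hcover
    _ ≤ ∑' k, F k := lintegral_iUnion_le _ _
    _ = ∑ k ∈ Finset.range N, F k + ∑' j, F (j + N) :=
        (ENNReal.summable.sum_add_tsum_nat_add' (k := N)).symm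
    _ ≤ ∑ _k ∈ Finset.range N, ENNReal.ofReal (C * (1 + rad x) ^ (-α)) +
          ∑' j : ℕ, ENNReal.ofReal (C * (1 + rad x) ^ (-α) * t ^ j) := by
        gcongr with k hk j
        · exact (h k x).1
        · exact htail j
    _ = ENNReal.ofReal (C * (1 + rad x) ^ (-α) * N + C * (1 + rad x) ^ (-α) * (1 / (1 - t))) := by
        rw [ENNReal.ofReal_add (by positivity) (by positivity)]
        congr 1
        · rw [Finset.sum_const, Finset.card_range, nsmul_eq_mul, mul_comm,
            ENNReal.ofReal_mul (p := C * (1 + rad x) ^ (-α)) (by positivity),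
            ENNReal.ofReal_natCast]
        · rw [← ENNReal.ofReal_tsum_of_nonneg (fun j => by positivity)
            ((summable_geometric_of_lt_one ht0.le ht1).mul_left _), tsum_mul_left,
            tsum_geometric_of_lt_one ht0.le ht1, one_div]
    _ ≤ _ := by
        apply ENNReal.ofReal_le_ofReal
        calc _ ≤ C * (1 + rad x) ^ (-α) * ((1 / log 2 + 1) * log (exp 1 + rad x)) +
              C * (1 + rad x) ^ (-α) * (1 / (1 - t) * log (exp 1 + rad x)) := by
              gcongr
              exact le_mul_of_one_le_right (by positivity) hL
          _ = _ := by ring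

/-! ### Bounds for the singular integral -/

lemma kernel_le {K : E3 → ℝ} (hK : ContinuousOn K {x : E3 | x ≠ 0})
    (hKhom : ∀ c : ℝ, 0 < c → ∀ x : E3, x ≠ 0 → K (c • x) = c ^ (-3 : ℝ) * K x) :
    ∃ C : ℝ, 0 < C ∧ ∀ v : E3, v ≠ 0 → |K v| ≤ C / ‖v‖ ^ 3 := by
  obtain ⟨C, hC⟩ := (isCompact_sphere (0 : E3) 1).exists_bound_of_continuousOn (f := K)
    (hK.mono fun v hv => by
      rw [mem_sphere_zero_iff_norm] at hv
      exact fun h0 : v = 0 => by simp [h0] at hv)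
  refine ⟨max C 1, by positivity, fun v hv => ?_⟩
  have hv0 : 0 < ‖v‖ := norm_pos_iff.2 hv
  have hu : ‖(‖v‖⁻¹ • v)‖ = 1 := by
    rw [norm_smul, norm_inv, norm_norm, inv_mul_cancel₀ hv0.ne']
  have hu0 : ‖v‖⁻¹ • v ≠ 0 := fun h => by simp [h] at hu
  have h1 := hKhom ‖v‖ hv0 _ hu0
  rw [smul_inv_smul₀ hv0.ne'] at h1
  have h2 := hC _ (mem_sphere_zero_iff_norm.2 hu)
  rw [Real.norm_eq_abs] at h2
  have h3 : ‖v‖ ^ (-3 : ℝ) = 1 / ‖v‖ ^ 3 := by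
    rw [Real.rpow_neg hv0.le, one_div]
    congr 1
    exact_mod_cast Real.rpow_natCast ‖v‖ 3
  rw [h1, h3, abs_mul, abs_of_pos (by positivity), one_div_mul_eq_div]
  gcongr
  exact h2.trans (le_max_left _ _)

/-- The part of the integral near the singularity, where the cancellation of `K` is used; the
constant does not depend on the truncation `δ`. -/
lemma near_le {K : E3 → ℝ} (hK : ContinuousOn K {x : E3 | x ≠ 0})
    {C₁ : ℝ} (hC₁ : 0 < C₁) (hKle : ∀ v : E3, v ≠ 0 → |K v| ≤ C₁ / ‖v‖ ^ 3)
    (hKmean : ∀ a b : ℝ, 0 < a → a < b →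
      (∫ x in {x : E3 | a < ‖x‖ ∧ ‖x‖ < b}, K x) = 0) :
    ∃ C : ℝ, 0 ≤ C ∧ ∀ (f : E3 → ℝ) (x : E3) (W δ : ℝ), Differentiable ℝ f → 0 < δ → δ < 1 →
      (∀ y : E3, ‖x - y‖ < 1 → ‖fderiv ℝ f y‖ ≤ W) →
      |∫ v in {v : E3 | δ < ‖v‖ ∧ ‖v‖ < 1}, K v * f (x - v)| ≤ C * W := by
  have hint : IntegrableOn (fun v : E3 => ‖v‖ ^ (-2 : ℝ)) (Metric.ball 0 1) := by
    apply integrableOn_ball_of_norm_le_rpow (C := 1) (α := 2) (by simp)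
      (by simp; norm_num)
    · refine Eventually.of_forall fun v => ?_
      rw [one_mul, Real.norm_eq_abs, abs_of_nonneg (by positivity)]
    · exact (measurable_norm.pow_const _).aestronglyMeasurable
  set J := ∫ v in Metric.ball (0 : E3) 1, ‖v‖ ^ (-2 : ℝ) with hJ
  have hJ0 : 0 ≤ J := integral_nonneg fun v => by positivity
  refine ⟨C₁ * J, by positivity, fun f x W δ hf hδ0 hδ1 hW => ?_⟩
  have hW0 : 0 ≤ W := (norm_nonneg _).trans (hW x (by simp))
  set A : Set E3 := {v : E3 | δ < ‖v‖ ∧ ‖v‖ < 1} with hA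
  have hAm : MeasurableSet A := (measurableSet_lt measurable_const measurable_norm).inter
    (measurableSet_lt measurable_norm measurable_const)
  have hAb : A ⊆ Metric.ball 0 1 := fun v hv => mem_ball_zero_iff.2 hv.2
  set A' : Set E3 := Metric.closedBall 0 1 ∩ {v | δ ≤ ‖v‖} with hA'
  have hA'c : IsCompact A' :=
    (isCompact_closedBall _ _).inter_right (isClosed_le continuous_const continuous_norm)
  have hAA' : A ⊆ A' := fun v hv => ⟨mem_closedBall_zero_iff.2 hv.2.le, hv.1.le⟩
  have hKA' : ContinuousOn K A' := hK.mono fun v hv h0 => by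
    have h1 : δ ≤ ‖v‖ := hv.2
    rw [h0, norm_zero] at h1
    linarith
  have hi1 : IntegrableOn (fun v => K v * f (x - v)) A :=
    ((hKA'.mul (hf.continuous.comp (by fun_prop)).continuousOn).integrableOn_compact hA'c).mono_set
      hAA'
  have hi2 : IntegrableOn (fun v => K v * f x) A :=
    ((hKA'.mul continuousOn_const).integrableOn_compact hA'c).mono_set hAA'
  have hz : ∫ v in A, K v * f x = 0 := by
    rw [integral_mul_const, hKmean δ 1 hδ0 hδ1, zero_mul]
  have hEq : ∫ v in A, K v * f (x - v) = ∫ v in A, (K v * f (x - v) - K v * f x) := by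
    rw [integral_sub hi1 hi2, hz, sub_zero]
  have hpt : ∀ v ∈ A, ‖K v * f (x - v) - K v * f x‖ ≤ C₁ * W * ‖v‖ ^ (-2 : ℝ) := by
    intro v hv
    have hv0 : 0 < ‖v‖ := hδ0.trans hv.1
    have h1 : ‖f (x - v) - f x‖ ≤ W * ‖x - v - x‖ :=
      (convex_ball x 1).norm_image_sub_le_of_norm_fderiv_le (𝕜 := ℝ)
        (fun y _ => hf y) (fun y hy => hW y (by
          rwa [mem_ball_iff_norm, norm_sub_rev] at hy))
        (Metric.mem_ball_self one_pos) (by rw [mem_ball_iff_norm]; simpa using hv.2)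
    rw [sub_sub_cancel_left, norm_neg] at h1
    rw [← mul_sub, norm_mul]
    calc ‖K v‖ * ‖f (x - v) - f x‖ ≤ (C₁ / ‖v‖ ^ 3) * (W * ‖v‖) := by
          gcongr
          exact hKle v (norm_pos_iff.1 hv0)
      _ = _ := by
          rw [Real.rpow_neg hv0.le,
            show ‖v‖ ^ (2 : ℝ) = ‖v‖ ^ 2 by exact_mod_cast Real.rpow_natCast ‖v‖ 2]
          field_simp
  rw [hEq, ← Real.norm_eq_abs]
  calc _ ≤ ∫ v in A, C₁ * W * ‖v‖ ^ (-2 : ℝ) :=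
        norm_integral_le_of_norm_le ((hint.mono_set hAb).const_mul _)
          ((ae_restrict_iff' hAm).2 (Eventually.of_forall hpt))
    _ = C₁ * W * ∫ v in A, ‖v‖ ^ (-2 : ℝ) := integral_const_mul _ _
    _ ≤ C₁ * W * J := by
        gcongr
        exact setIntegral_mono_set hint (Eventually.of_forall fun v => by positivity)
          hAb.eventuallyLE
    _ = _ := by ring

/-- The part of the integral at distance at least `1` from the singularity, where only the sizes of
`K` and `f` are used. -/
lemma far_le {K : E3 → ℝ} {C₁ : ℝ} (hC₁ : 0 < C₁) (hKle : ∀ v : E3, v ≠ 0 → |K v| ≤ C₁ / ‖v‖ ^ 3)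
    {a b : ℝ} (ha0 : 0 < a) (ha2 : a < 2) (hb : 0 < b) :
    ∃ C : ℝ, 0 ≤ C ∧ ∀ (f : E3 → ℝ) (x : E3),
      (∀ y : E3, |f y| ≤ log (exp 1 + rad y) ^ b / (1 + rad y) ^ a) →
      |∫ v in {v : E3 | 1 ≤ ‖v‖}, K v * f (x - v)| ≤
        C * (log (exp 1 + rad x) ^ b / (1 + rad x) ^ a * log (exp 1 + rad x)) := by
  obtain ⟨C₂, hC₂, hw⟩ := weight_le ha0 hb
  obtain ⟨D₁, hD₁, h1⟩ := lintegral_far_le ha0 ha2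
  obtain ⟨D₂, hD₂, h2⟩ := lintegral_far_le (α := a / 2) (by linarith) (by linarith)
  refine ⟨C₁ * C₂ * (D₁ + D₂), by positivity, fun f x hf => ?_⟩
  have hr := rad_nonneg x
  have hL : 1 ≤ log (exp 1 + rad x) := by
    rw [Real.le_log_iff_exp_le (by positivity)]; linarith
  set w := log (exp 1 + rad x) ^ b / (1 + rad x) ^ a with hwdef
  have hw0 : 0 ≤ w := by positivity
  set S : Set E3 := {v : E3 | 1 ≤ ‖v‖} with hS
  have hSm : MeasurableSet S := measurableSet_le measurable_const measurable_norm
  set P : ℝ → E3 → ENNReal :=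
    fun α v => ENNReal.ofReal ((1 + rad (x - v)) ^ (-α) / ‖v‖ ^ 3) with hP
  have hPm : ∀ α, Measurable (P α) := fun α => by
    have := (continuous_rad.comp (continuous_const.sub continuous_id : Continuous fun v => x - v)).measurable
    exact (((measurable_const.add this).pow_const _).div (measurable_norm.pow_const _)).ennreal_ofReal
  set c : ℝ → ENNReal := fun α => ENNReal.ofReal (C₁ * C₂ * w * (1 + rad x) ^ α) with hc
  have hpt : ∀ v ∈ S, ‖K v * f (x - v)‖ₑ ≤ c a * P a v + c (a / 2) * P (a / 2) v := by
    intro v hv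
    have hv0 : 0 < ‖v‖ := one_pos.trans_le hv
    have hrv := rad_nonneg (x - v)
    rw [← ofReal_norm, hc, hP]
    dsimp only
    rw [← ENNReal.ofReal_mul (by positivity), ← ENNReal.ofReal_mul (by positivity),
      ← ENNReal.ofReal_add (by positivity) (by positivity)]
    apply ENNReal.ofReal_le_ofReal
    rw [norm_mul]
    calc ‖K v‖ * ‖f (x - v)‖ ≤ (C₁ / ‖v‖ ^ 3) * (C₂ * w *
          (((1 + rad x) / (1 + rad (x - v))) ^ a + ((1 + rad x) / (1 + rad (x - v))) ^ (a / 2))) := by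
          gcongr
          · exact hKle v (norm_pos_iff.1 hv0)
          · exact (hf _).trans (hw _ _ hr hrv)
      _ = _ := by
          rw [Real.div_rpow (by positivity) (by positivity),
            Real.div_rpow (by positivity) (by positivity),
            Real.rpow_neg (by positivity), Real.rpow_neg (by positivity)]
          field_simp
  have hterm : ∀ α D, 0 < D → ∫⁻ v in S, P α v ≤
      ENNReal.ofReal (D * (1 + rad x) ^ (-α) * log (exp 1 + rad x)) →
      c α * ∫⁻ v in S, P α v ≤ ENNReal.ofReal (C₁ * C₂ * D * (w * log (exp 1 + rad x))) := by
    intro α D hD h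
    refine (mul_le_mul_right h _).trans ?_
    rw [hc, ← ENNReal.ofReal_mul (by positivity), Real.rpow_neg (by positivity)]
    apply le_of_eq
    congr 1
    field_simp
  have hbound : ‖∫ v in S, K v * f (x - v)‖ₑ ≤
      ENNReal.ofReal (C₁ * C₂ * (D₁ + D₂) * (w * log (exp 1 + rad x))) := by
    calc _ ≤ ∫⁻ v in S, ‖K v * f (x - v)‖ₑ := enorm_integral_le_lintegral_enorm _
      _ ≤ ∫⁻ v in S, (c a * P a v + c (a / 2) * P (a / 2) v) := setLIntegral_mono' hSm hpt
      _ = (c a * ∫⁻ v in S, P a v) + c (a / 2) * ∫⁻ v in S, P (a / 2) v := by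
          rw [lintegral_add_left ((hPm a).const_mul _), lintegral_const_mul _ (hPm a),
            lintegral_const_mul _ (hPm (a / 2))]
      _ ≤ _ := add_le_add (hterm _ _ hD₁ (h1 x)) (hterm _ _ hD₂ (h2 x))
      _ = _ := by
          rw [← ENNReal.ofReal_add (by positivity) (by positivity)]
          congr 1; ring
  rw [← ofReal_norm, ENNReal.ofReal_le_ofReal_iff (by positivity)] at hbound
  exact hbound

/-- if `K` is a smooth Calderón–Zygmund kernel (homogeneous of degree `-3`
with zero mean on spheres) and `f` is a smooth axisymmetric function with
`|f| + |∇f| ≤ ln^b(e + |x'|) / (1 + |x'|)^a`, `0 < a < 2`, `b > 0`, then the principal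
value convolution `Tf` satisfies `|Tf(x)| ≤ c₀ ln^{b+1}(e + |x'|) / (1 + |x'|)^a`. -/
theorem stmt_13 (K : E3 → ℝ)
    (hKsmooth : ContDiffOn ℝ (⊤ : ℕ∞) K {x : E3 | x ≠ 0})
    (hKhom : ∀ c : ℝ, 0 < c → ∀ x : E3, x ≠ 0 → K (c • x) = c ^ (-3 : ℝ) * K x)
    (hKmean : ∀ a b : ℝ, 0 < a → a < b →
      (∫ x in {x : E3 | a < ‖x‖ ∧ ‖x‖ < b}, K x) = 0)
    (a b : ℝ) (ha0 : 0 < a) (ha2 : a < 2) (hb : 0 < b)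
    (f : E3 → ℝ) (hf : ContDiff ℝ (⊤ : ℕ∞) f)
    (hax : ∃ q : ℝ → ℝ → ℝ, ∀ x : E3, f x = q (rad x) (x 2))
    (hdecay : ∀ x : E3,
      |f x| + ‖fderiv ℝ f x‖ ≤ Real.log (Real.exp 1 + rad x) ^ b / (1 + rad x) ^ a)
    (T : E3 → ℝ)
    (hT : ∀ x : E3, Tendsto
      (fun δ : ℝ => ∫ y in {y : E3 | δ < ‖x - y‖}, K (x - y) * f y)
      (nhdsWithin 0 (Set.Ioi 0)) (nhds (T x))) :
    ∃ c₀ : ℝ, ∀ x : E3,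
      |T x| ≤ c₀ * Real.log (Real.exp 1 + rad x) ^ (b + 1) / (1 + rad x) ^ a := by
  obtain ⟨C₁, hC₁, hKle⟩ := kernel_le hKsmooth.continuousOn hKhom
  obtain ⟨N, hN0, hnear⟩ := near_le hKsmooth.continuousOn hC₁ hKle hKmean
  obtain ⟨F, hF0, hfar⟩ := far_le hC₁ hKle ha0 ha2 hb
  obtain ⟨C₂, hC₂, hw⟩ := weight_le ha0 hb
  refine ⟨N * (C₂ * (2 ^ a + 2 ^ (a / 2))) + F, fun x => ?_⟩
  have hr := rad_nonneg x
  have hL : 1 ≤ log (exp 1 + rad x) := by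
    rw [Real.le_log_iff_exp_le (by positivity)]; linarith
  set w := log (exp 1 + rad x) ^ b / (1 + rad x) ^ a with hwdef
  have hw0 : 0 ≤ w := by positivity
  have hW : ∀ y : E3, ‖x - y‖ < 1 → ‖fderiv ℝ f y‖ ≤ C₂ * (2 ^ a + 2 ^ (a / 2)) * w := by
    intro y hy
    have hry := rad_nonneg y
    have h1 : rad x ≤ rad y + 1 := by
      have := rad_le_rad_sub_add x (x - y)
      rw [sub_sub_cancel] at this
      linarith
    have h2 : (1 + rad x) / (1 + rad y) ≤ 2 := by
      rw [div_le_iff₀ (by positivity)]; linarith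
    calc ‖fderiv ℝ f y‖ ≤ log (exp 1 + rad y) ^ b / (1 + rad y) ^ a := by
          linarith [hdecay y, abs_nonneg (f y)]
      _ ≤ _ := hw _ _ hr hry
      _ ≤ C₂ * w * (2 ^ a + 2 ^ (a / 2)) := by gcongr
      _ = _ := by ring
  have hbound : ∀ δ : ℝ, 0 < δ → δ < 1 →
      |∫ y in {y : E3 | δ < ‖x - y‖}, K (x - y) * f y| ≤
        N * (C₂ * (2 ^ a + 2 ^ (a / 2)) * w) + F * (w * log (exp 1 + rad x)) := by
    intro δ hδ0 hδ1
    have hm : MeasurableSet {v : E3 | δ < ‖v‖} := measurableSet_lt measurable_const measurable_norm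
    have hchange : ∫ y in {y : E3 | δ < ‖x - y‖}, K (x - y) * f y =
        ∫ v in {v : E3 | δ < ‖v‖}, K v * f (x - v) := by
      have hm' : MeasurableSet {y : E3 | δ < ‖x - y‖} :=
        measurableSet_lt measurable_const (measurable_const.sub measurable_id).norm
      rw [← integral_indicator hm, ← integral_sub_left_eq_self _ volume x, ← integral_indicator hm']
      congr 1
      ext y
      simp [indicator]
    rw [hchange]
    -- without integrability the Bochner integral is `0` and the bound is trivial
    by_cases hi : IntegrableOn (fun v => K v * f (x - v)) {v : E3 | δ < ‖v‖}
    · have hU : {v : E3 | δ < ‖v‖} = {v : E3 | δ < ‖v‖ ∧ ‖v‖ < 1} ∪ {v : E3 | 1 ≤ ‖v‖} := by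
        ext v
        simp only [mem_ofPred_eq, mem_union]
        constructor
        · intro h
          rcases lt_or_ge ‖v‖ 1 with h1 | h1
          · exact Or.inl ⟨h, h1⟩
          · exact Or.inr h1
        · rintro (h | h)
          · exact h.1
          · linarith
      have hdisj : Disjoint {v : E3 | δ < ‖v‖ ∧ ‖v‖ < 1} {v : E3 | 1 ≤ ‖v‖} := by
        rw [Set.disjoint_left]
        intro v hv hv'
        exact absurd hv.2 (not_lt.2 hv')
      rw [hU, setIntegral_union hdisj (measurableSet_le measurable_const measurable_norm)
        (hi.mono_set (hU ▸ subset_union_left)) (hi.mono_set (hU ▸ subset_union_right))]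
      refine (abs_add_le _ _).trans (add_le_add ?_ ?_)
      · exact hnear f x _ δ (hf.differentiable (by simp)) hδ0 hδ1 hW
      · exact hfar f x fun y => by linarith [hdecay y, norm_nonneg (fderiv ℝ f y)]
    · rw [integral_undef hi, abs_zero]
      positivity
  have hlim := (hT x).abs
  have hev : ∀ᶠ δ : ℝ in nhdsWithin 0 (Ioi 0),
      |∫ y in {y : E3 | δ < ‖x - y‖}, K (x - y) * f y| ≤
        N * (C₂ * (2 ^ a + 2 ^ (a / 2)) * w) + F * (w * log (exp 1 + rad x)) := by
    filter_upwards [Ioo_mem_nhdsGT (one_pos : (0 : ℝ) < 1)] with δ hδ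
    exact hbound δ hδ.1 hδ.2
  refine (le_of_tendsto hlim hev).trans ?_
  have hpow : log (exp 1 + rad x) ^ (b + 1) / (1 + rad x) ^ a = w * log (exp 1 + rad x) := by
    rw [Real.rpow_add (by positivity), Real.rpow_one, hwdef]
    ring
  rw [mul_div_assoc, hpow, add_mul]
  refine add_le_add_left ?_ _
  calc N * (C₂ * (2 ^ a + 2 ^ (a / 2)) * w) = N * (C₂ * (2 ^ a + 2 ^ (a / 2))) * w := by ring
    _ ≤ _ := mul_le_mul_of_nonneg_left (le_mul_of_one_le_right hw0 hL) (by positivity)
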